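/- Let r ∈ ℝ^m and c ∈ ℝ^n be vectors of positive reals with Σ_i r_i = Σ_j c_j, and let I ⊆ {1,…,m}, J ⊆ {1,…,n} be nonempty proper subsets with Σ_{i ∈ I} r_i = Σ_{j ∈ J} c_j. Let A′ be an extreme point of the transportation polytope on rows I and columns J (with marginals (r_i)_{i∈I}, (c_j)_{j∈J}) and let A″ be an extreme point of the transportation polytope on rows Iᶜ and columns Jᶜ (with marginals (r_i)_{i∈Iᶜ}, (c_j)_{j∈Jᶜ}). Then the m×n matrix A that agrees with A′ on I×J, agrees with A″ on Iᶜ×Jᶜ, and is zero on I×Jᶜ and Iᶜ×J, is an extreme point of T_{rc}. -/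

import Mathlib

/-!
Prescribing that some entries vanish cuts out a face of a transportation polytope, because a
positive combination of nonnegative numbers is zero only if all of them are. The face on which both
off-diagonal blocks vanish is the product of the transportation polytopes of the two diagonal
blocks. Extreme points of a product are pairs of extreme points, and extreme points of a face are
extreme in the whole polytope.
-/

open Matrix

section LinearMap

variable {𝕜 E F : Type*} [Ring 𝕜] [PartialOrder 𝕜] [IsOrderedRing 𝕜]
  [AddCommGroup E] [Module 𝕜 E] [AddCommGroup F] [Module 𝕜 F]

theorem image_extremePoints_of_injective (f : E →ₗ[𝕜] F) (hf : Function.Injective f) (s : Set E) :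
    f '' s.extremePoints 𝕜 = (f '' s).extremePoints 𝕜 := by
  have hsegment (x y : E) : f '' openSegment 𝕜 x y = openSegment 𝕜 (f x) (f y) :=
    image_openSegment 𝕜 f.toAffineMap x y
  have hextreme (x : E) : f x ∈ (f '' s).extremePoints 𝕜 ↔ x ∈ s.extremePoints 𝕜 := by
    simp only [mem_extremePoints_iff_left, Set.forall_mem_image, ← hsegment,
      hf.mem_set_image, hf.eq_iff]
  ext y
  constructor
  · rintro ⟨x, hx, rfl⟩
    exact (hextreme x).2 hx
  · intro hy
    obtain ⟨x, -, rfl⟩ := hy.1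
    exact ⟨x, (hextreme x).1 hy, rfl⟩

end LinearMap

section BlockDiagonal

variable {𝕜 m₁ m₂ n₁ n₂ : Type*} [Semiring 𝕜]

variable (𝕜 m₁ m₂ n₁ n₂) in
/-- The linear embedding of pairs of matrices as block diagonal matrices
`(B, C) ↦ fromBlocks B 0 0 C`. The diagonal blocks may be rectangular and of different shapes,
unlike those of `Matrix.blockDiagonal`. -/
def fromDiagonalBlocks :
    Matrix m₁ n₁ 𝕜 × Matrix m₂ n₂ 𝕜 →ₗ[𝕜] Matrix (m₁ ⊕ m₂) (n₁ ⊕ n₂) 𝕜 where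
  toFun BC := fromBlocks BC.1 0 0 BC.2
  map_add' _ _ := by simp [fromBlocks_add]
  map_smul' _ _ := by simp [fromBlocks_smul]

theorem fromDiagonalBlocks_apply (BC : Matrix m₁ n₁ 𝕜 × Matrix m₂ n₂ 𝕜) :
    fromDiagonalBlocks 𝕜 m₁ m₂ n₁ n₂ BC = fromBlocks BC.1 0 0 BC.2 :=
  rfl

theorem fromDiagonalBlocks_injective :
    Function.Injective (fromDiagonalBlocks 𝕜 m₁ m₂ n₁ n₂) := fun _ _ h ↦
  have hblocks := fromBlocks_inj.1 h
  Prod.ext hblocks.1 hblocks.2.2.2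

theorem mem_range_fromDiagonalBlocks_iff {X : Matrix (m₁ ⊕ m₂) (n₁ ⊕ n₂) 𝕜} :
    X ∈ Set.range (fromDiagonalBlocks 𝕜 m₁ m₂ n₁ n₂) ↔
      ∀ i j, i.isLeft ≠ j.isLeft → X i j = 0 := by
  constructor
  · rintro ⟨BC, rfl⟩
    simp [fromDiagonalBlocks_apply]
  · intro hX
    refine ⟨(X.toBlocks₁₁, X.toBlocks₂₂), ?_⟩
    ext (i | i) (j | j)
    · rfl
    · exact (hX (.inl i) (.inr j) (by simp)).symm
    · exact (hX (.inr i) (.inl j) (by simp)).symm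
    · rfl

end BlockDiagonal

/-- The transportation polytope `T_{rc}`: the nonnegative matrices with row sums `r` and column
sums `c`. -/
def transportationPolytope {𝕜 m n : Type*} [AddCommMonoid 𝕜] [LE 𝕜] [Fintype m] [Fintype n]
    (r : m → 𝕜) (c : n → 𝕜) : Set (Matrix m n 𝕜) :=
  {X | (∀ i j, 0 ≤ X i j) ∧ (∀ i, ∑ j, X i j = r i) ∧ ∀ j, ∑ i, X i j = c j}

namespace transportationPolytope

section Reindex

variable {𝕜 m m' n n' : Type*} [Fintype m] [Fintype m'] [Fintype n] [Fintype n']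

theorem reindex_mem_iff [AddCommMonoid 𝕜] [LE 𝕜] (e : m ≃ m') (f : n ≃ n') {r : m' → 𝕜}
    {c : n' → 𝕜} {X : Matrix m n 𝕜} :
    reindex e f X ∈ transportationPolytope r c ↔ X ∈ transportationPolytope (r ∘ e) (c ∘ f) := by
  simp only [transportationPolytope, Set.mem_ofPred_eq, reindex_apply, submatrix_apply,
    e.symm.forall_congr_left, f.symm.forall_congr_left, Equiv.symm_symm, Equiv.symm_apply_apply,
    Function.comp_apply, fun j ↦ e.symm.sum_comp (X · j),
    fun i ↦ f.symm.sum_comp (X i)]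

variable [Ring 𝕜] [PartialOrder 𝕜] [IsOrderedRing 𝕜]

theorem reindex_mem_extremePoints_iff (e : m ≃ m') (f : n ≃ n') {r : m' → 𝕜} {c : n' → 𝕜}
    {X : Matrix m n 𝕜} :
    reindex e f X ∈ (transportationPolytope r c).extremePoints 𝕜 ↔
      X ∈ (transportationPolytope (r ∘ e) (c ∘ f)).extremePoints 𝕜 := by
  let φ := reindexLinearEquiv 𝕜 𝕜 e f
  have himage : φ '' transportationPolytope (r ∘ e) (c ∘ f) = transportationPolytope r c := by
    ext Y
    obtain ⟨X, rfl⟩ := φ.surjective Y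
    rw [φ.injective.mem_set_image]
    exact (reindex_mem_iff e f).symm
  rw [← himage, ← image_extremePoints φ]
  exact φ.injective.mem_set_image

end Reindex

section Face

variable {𝕜 m n : Type*} [Fintype m] [Fintype n]
  [Semiring 𝕜] [PartialOrder 𝕜] [IsStrictOrderedRing 𝕜]

theorem isExtreme_setOf_forall_eq_zero (r : m → 𝕜) (c : n → 𝕜) (S : m → n → Prop) :
    IsExtreme 𝕜 (transportationPolytope r c)
      {X ∈ transportationPolytope r c | ∀ i j, S i j → X i j = 0} := by
  refine ⟨Set.sep_subset _ _, ?_⟩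
  rintro X hX Y hY _ ⟨-, hzero⟩ ⟨a, b, ha, hb, -, rfl⟩
  refine ⟨hX, fun i j hij ↦ ?_⟩
  have hsum : a * X i j + b * Y i j = 0 := hzero i j hij
  have hmul : a * X i j = 0 := ((add_eq_zero_iff_of_nonneg (mul_nonneg ha.le (hX.1 i j))
    (mul_nonneg hb.le (hY.1 i j))).1 hsum).1
  exact ((hX.1 i j).eq_of_not_lt fun hpos ↦ (mul_pos ha hpos).ne' hmul).symm

end Face

section Blocks

variable {𝕜 m₁ m₂ n₁ n₂ : Type*} [Fintype m₁] [Fintype m₂] [Fintype n₁] [Fintype n₂]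

theorem fromBlocks_mem_iff [AddCommMonoid 𝕜] [Preorder 𝕜] {r : m₁ ⊕ m₂ → 𝕜} {c : n₁ ⊕ n₂ → 𝕜}
    {B : Matrix m₁ n₁ 𝕜} {C : Matrix m₂ n₂ 𝕜} :
    fromBlocks B 0 0 C ∈ transportationPolytope r c ↔
      B ∈ transportationPolytope (r ∘ Sum.inl) (c ∘ Sum.inl) ∧
        C ∈ transportationPolytope (r ∘ Sum.inr) (c ∘ Sum.inr) := by
  simp only [transportationPolytope, Set.mem_ofPred_eq, Sum.forall, Fintype.sum_sum_type,
    fromBlocks_apply₁₁, fromBlocks_apply₁₂, fromBlocks_apply₂₁, fromBlocks_apply₂₂,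
    Matrix.zero_apply, Finset.sum_const_zero, add_zero, zero_add, le_refl, implies_true, and_true,
    true_and, Function.comp_apply]
  tauto

theorem image_fromDiagonalBlocks_prod [Semiring 𝕜] [Preorder 𝕜] (r : m₁ ⊕ m₂ → 𝕜)
    (c : n₁ ⊕ n₂ → 𝕜) :
    fromDiagonalBlocks 𝕜 m₁ m₂ n₁ n₂ ''
        (transportationPolytope (r ∘ Sum.inl) (c ∘ Sum.inl) ×ˢ
          transportationPolytope (r ∘ Sum.inr) (c ∘ Sum.inr)) =
      {X ∈ transportationPolytope r c | ∀ i j, i.isLeft ≠ j.isLeft → X i j = 0} := by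
  ext X
  rw [Set.mem_sep_iff, ← mem_range_fromDiagonalBlocks_iff]
  constructor
  · rintro ⟨BC, hBC, rfl⟩
    exact ⟨fromBlocks_mem_iff.2 hBC, BC, rfl⟩
  · rintro ⟨hX, BC, rfl⟩
    exact ⟨BC, fromBlocks_mem_iff.1 hX, rfl⟩

theorem fromBlocks_mem_extremePoints_iff [Ring 𝕜] [PartialOrder 𝕜] [IsStrictOrderedRing 𝕜]
    {r : m₁ ⊕ m₂ → 𝕜} {c : n₁ ⊕ n₂ → 𝕜} {B : Matrix m₁ n₁ 𝕜} {C : Matrix m₂ n₂ 𝕜} :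
    fromBlocks B 0 0 C ∈ (transportationPolytope r c).extremePoints 𝕜 ↔
      B ∈ (transportationPolytope (r ∘ Sum.inl) (c ∘ Sum.inl)).extremePoints 𝕜 ∧
        C ∈ (transportationPolytope (r ∘ Sum.inr) (c ∘ Sum.inr)).extremePoints 𝕜 := by
  let T₁ := transportationPolytope (r ∘ Sum.inl) (c ∘ Sum.inl)
  let T₂ := transportationPolytope (r ∘ Sum.inr) (c ∘ Sum.inr)
  let φ := fromDiagonalBlocks 𝕜 m₁ m₂ n₁ n₂
  have hface : IsExtreme 𝕜 (transportationPolytope r c) (φ '' T₁ ×ˢ T₂) := by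
    rw [image_fromDiagonalBlocks_prod]
    exact isExtreme_setOf_forall_eq_zero r c _
  have hmem (h : φ (B, C) ∈ transportationPolytope r c) : φ (B, C) ∈ φ '' T₁ ×ˢ T₂ :=
    Set.mem_image_of_mem φ (fromBlocks_mem_iff.1 h)
  calc φ (B, C) ∈ (transportationPolytope r c).extremePoints 𝕜
    _ ↔ φ (B, C) ∈ (φ '' T₁ ×ˢ T₂).extremePoints 𝕜 := by
      rw [hface.extremePoints_eq, Set.mem_inter_iff, iff_and_self]
      exact fun h ↦ hmem h.1
    _ ↔ (B, C) ∈ (T₁ ×ˢ T₂).extremePoints 𝕜 := by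
      rw [← image_extremePoints_of_injective φ fromDiagonalBlocks_injective,
        fromDiagonalBlocks_injective.mem_set_image]
    _ ↔ B ∈ T₁.extremePoints 𝕜 ∧ C ∈ T₂.extremePoints 𝕜 := by
      rw [extremePoints_prod, Set.mem_prod]

end Blocks

end transportationPolytope

theorem eq_reindex_sumCompl_fromBlocks {α m n : Type*} [Zero α] {p : m → Prop} {q : n → Prop}
    [DecidablePred p] [DecidablePred q] {A : Matrix m n α}
    {B : Matrix {i // p i} {j // q j} α} {C : Matrix {i // ¬p i} {j // ¬q j} α}
    (hA : ∀ i j, A i j =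
      if hi : p i then (if hj : q j then B ⟨i, hi⟩ ⟨j, hj⟩ else 0)
      else (if hj : q j then 0 else C ⟨i, hi⟩ ⟨j, hj⟩)) :
    A = reindex (Equiv.sumCompl p) (Equiv.sumCompl q) (fromBlocks B 0 0 C) := by
  ext i j
  by_cases hi : p i <;> by_cases hj : q j <;> simp [hA, hi, hj]

theorem stmt11_general {𝕜 m n : Type*} [Ring 𝕜] [PartialOrder 𝕜] [IsStrictOrderedRing 𝕜]
    [Fintype m] [Fintype n] {p : m → Prop} {q : n → Prop} [DecidablePred p] [DecidablePred q]
    [Fintype {i // p i}] [Fintype {i // ¬p i}] [Fintype {j // q j}] [Fintype {j // ¬q j}]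
    {r : m → 𝕜} {c : n → 𝕜}
    {A' : Matrix {i // p i} {j // q j} 𝕜} {A'' : Matrix {i // ¬p i} {j // ¬q j} 𝕜} :
    reindex (Equiv.sumCompl p) (Equiv.sumCompl q) (fromBlocks A' 0 0 A'') ∈
        (transportationPolytope r c).extremePoints 𝕜 ↔
      A' ∈ (transportationPolytope (fun i ↦ r i.1) (fun j ↦ c j.1)).extremePoints 𝕜 ∧
        A'' ∈ (transportationPolytope (fun i ↦ r i.1) (fun j ↦ c j.1)).extremePoints 𝕜 :=
  (transportationPolytope.reindex_mem_extremePoints_iff _ _).trans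
    transportationPolytope.fromBlocks_mem_extremePoints_iff

/-- Block matrices built from extreme points of the `I × J` and `Iᶜ × Jᶜ`
transportation polytopes are extreme points of `T_{rc}`. -/
theorem stmt11 (m n : ℕ) (r : Fin m → ℝ) (c : Fin n → ℝ)
    (hr : ∀ i, 0 < r i) (hc : ∀ j, 0 < c j) (hs : ∑ i, r i = ∑ j, c j)
    (I : Finset (Fin m)) (J : Finset (Fin n))
    (hI : I.Nonempty) (hI' : I ≠ Finset.univ) (hJ : J.Nonempty) (hJ' : J ≠ Finset.univ)
    (hIJ : ∑ i ∈ I, r i = ∑ j ∈ J, c j)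
    (T : Set (Matrix (Fin m) (Fin n) ℝ))
    (hT : T = {A | (∀ i j, 0 ≤ A i j) ∧ (∀ i, ∑ j, A i j = r i) ∧
      (∀ j, ∑ i, A i j = c j)})
    (T' : Set (Matrix {i // i ∈ I} {j // j ∈ J} ℝ))
    (hT' : T' = {B | (∀ i j, 0 ≤ B i j) ∧ (∀ i, ∑ j, B i j = r i.1) ∧
      (∀ j, ∑ i, B i j = c j.1)})
    (T'' : Set (Matrix {i // i ∉ I} {j // j ∉ J} ℝ))
    (hT'' : T'' = {B | (∀ i j, 0 ≤ B i j) ∧ (∀ i, ∑ j, B i j = r i.1) ∧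
      (∀ j, ∑ i, B i j = c j.1)})
    (A' : Matrix {i // i ∈ I} {j // j ∈ J} ℝ) (hA' : A' ∈ Set.extremePoints ℝ T')
    (A'' : Matrix {i // i ∉ I} {j // j ∉ J} ℝ) (hA'' : A'' ∈ Set.extremePoints ℝ T'')
    (A : Matrix (Fin m) (Fin n) ℝ)
    (hA : ∀ i j, A i j =
      if hi : i ∈ I then (if hj : j ∈ J then A' ⟨i, hi⟩ ⟨j, hj⟩ else 0)
      else (if hj : j ∈ J then 0 else A'' ⟨i, hi⟩ ⟨j, hj⟩)) :
    A ∈ Set.extremePoints ℝ T := by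
  subst hT hT' hT''
  rw [eq_reindex_sumCompl_fromBlocks hA]
  exact stmt11_general.2 ⟨hA', hA''⟩
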